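/- The functional τ is tracial for the star product: for all Φ, Ψ ∈ S^c, τ(Φ ⋆ Ψ) = τ(Ψ ⋆ Φ), where τ(Θ) = ∫₀¹∫₀¹ Θ(x, y, 0) dx dy. -/

import Mathlib

/-!
At `p = 0` the two shifts in the star product coincide, so `(Φ ⋆ Ψ)(x, y, 0)` is the sum over `q` of
the translates by `(ħqμ, ħqν)` of `F_q(x, y) = Φ(x, y, q) Ψ(x, y, -q)`. The twists of `Φ(·, ·, q)` and
`Ψ(·, ·, -q)` under `x ↦ x + 1` cancel, so `F_q` is a function on the torus `ℝ²/ℤ²` and its integral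
over the unit square is unchanged by the translation (`integral_square_translate`). The sum may be
integrated termwise because the elements of `S^c` are `O(1/(1+p²))` uniformly in `(x, y)`
(`InSc.exists_bound`); hence `τ(Φ ⋆ Ψ) = ∑_q ∫∫ F_q` (`tr_starProd`), and the substitution `q ↦ -q`
exchanges the roles of `Φ` and `Ψ`.
-/

open MeasureTheory ENNReal

noncomputable section

/-- Membership in the space `S^c` of Rieffel's quantum Heisenberg manifold. -/
structure InSc (c : ℕ) (Φ : ℝ → ℝ → ℤ → ℂ) : Prop where
  smooth : ∀ p : ℤ, ContDiff ℝ (⊤ : ℕ∞) (fun xy : ℝ × ℝ => Φ xy.1 xy.2 p)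
  periodic_y : ∀ (x y : ℝ) (p : ℤ), Φ x (y + 1) p = Φ x y p
  twisted : ∀ (k : ℤ) (x y : ℝ) (p : ℤ),
    Φ (x + k) y p = Complex.exp (2 * Real.pi * Complex.I * ((c : ℂ) * (k : ℂ) * (p : ℂ) * (y : ℂ))) * Φ x y p
  poly_bounded : ∀ (P : Polynomial ℤ) (m n : ℕ) (K : Set (ℝ × ℝ)), IsCompact K →
    ∃ C : ℝ, ∀ (x y : ℝ) (p : ℤ), (x, y) ∈ K →
      |((P.eval p : ℤ) : ℝ)| * ‖iteratedDeriv m (fun x' => iteratedDeriv n (fun y' => Φ x' y' p) y) x‖ ≤ C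

/-- The star product on `S^c`. -/
def starProd (hbar μ ν : ℝ) (Φ Ψ : ℝ → ℝ → ℤ → ℂ) : ℝ → ℝ → ℤ → ℂ :=
  fun x y p => ∑' q : ℤ,
    Φ (x - hbar * ((q - p : ℤ) : ℝ) * μ) (y - hbar * ((q - p : ℤ) : ℝ) * ν) q *
    Ψ (x - hbar * (q : ℝ) * μ) (y - hbar * (q : ℝ) * ν) (p - q)

/-- The involution on `S^c`. -/
def invol (Φ : ℝ → ℝ → ℤ → ℂ) : ℝ → ℝ → ℤ → ℂ :=
  fun x y p => (starRingEnd ℂ) (Φ x y (-p))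

/-- The norm `‖·‖_{∞,∞,1}`, valued in `ℝ≥0∞`. -/
def norm1 (Φ : ℝ → ℝ → ℤ → ℂ) : ℝ≥0∞ :=
  ∑' p : ℤ, ⨆ x : ℝ, ⨆ y : ℝ, (‖Φ x y p‖₊ : ℝ≥0∞)

/-- The representation `π` acting on functions on `ℝ × [0,1) × ℤ`. -/
def piRep (hbar μ ν : ℝ) (Φ ξ : ℝ → ℝ → ℤ → ℂ) : ℝ → ℝ → ℤ → ℂ :=
  fun x y p => ∑' q : ℤ,
    Φ (x - hbar * ((q - 2 * p : ℤ) : ℝ) * μ) (y - hbar * ((q - 2 * p : ℤ) : ℝ) * ν) q *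
    ξ x y (p - q)

/-- Square integrability (with measurability) on `ℝ × [0,1) × ℤ`. -/
def SqInt (ξ : ℝ → ℝ → ℤ → ℂ) : Prop :=
  (∀ p : ℤ, Measurable (fun xy : ℝ × ℝ => ξ xy.1 xy.2 p)) ∧
  (∫⁻ x : ℝ, ∫⁻ y in Set.Ico (0:ℝ) 1, ∑' p : ℤ, ((‖ξ x y p‖₊ : ℝ≥0∞)) ^ 2) < ⊤

/-- The `L²` norm on `ℝ × [0,1) × ℤ`, valued in `ℝ≥0∞`. -/
def l2norm (ξ : ℝ → ℝ → ℤ → ℂ) : ℝ≥0∞ :=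
  (∫⁻ x : ℝ, ∫⁻ y in Set.Ico (0:ℝ) 1, ∑' p : ℤ, ((‖ξ x y p‖₊ : ℝ≥0∞)) ^ 2) ^ (1/2 : ℝ)

/-- The inner product on `L²(ℝ × [0,1) × ℤ)`. -/
def ip (ξ η : ℝ → ℝ → ℤ → ℂ) : ℂ :=
  ∫ x : ℝ, ∫ y in Set.Ico (0:ℝ) 1, ∑' p : ℤ, ξ x y p * (starRingEnd ℂ) (η x y p)

/-- The action of the Heisenberg group. -/
def Lact (c : ℕ) (r s t : ℝ) (Φ : ℝ → ℝ → ℤ → ℂ) : ℝ → ℝ → ℤ → ℂ :=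
  fun x y p => Complex.exp (2 * Real.pi * Complex.I *
    ((p : ℂ) * ((t : ℂ) + (c : ℂ) * (s : ℂ) * ((x : ℂ) - (r : ℂ))))) * Φ (x - r) (y - s) p

/-- The trace `τ`. -/
def tr (Φ : ℝ → ℝ → ℤ → ℂ) : ℂ :=
  ∫ x in (0:ℝ)..1, ∫ y in (0:ℝ)..1, Φ x y 0

/-- The zero mode `Φ⁽⁰⁾`. -/
def zeroMode (Φ : ℝ → ℝ → ℤ → ℂ) : ℝ → ℝ → ℤ → ℂ :=
  fun x y p => if p = 0 then Φ x y 0 else 0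

/-- The derivation `δ₁`. -/
def d1 (Φ : ℝ → ℝ → ℤ → ℂ) : ℝ → ℝ → ℤ → ℂ :=
  fun x y p => -(deriv (fun x' => Φ x' y p) x)

/-- The derivation `δ₂`. -/
def d2 (c : ℕ) (Φ : ℝ → ℝ → ℤ → ℂ) : ℝ → ℝ → ℤ → ℂ :=
  fun x y p => 2 * Real.pi * Complex.I * (c : ℂ) * (p : ℂ) * (x : ℂ) * Φ x y p
    - deriv (fun y' => Φ x y' p) y

/-- The derivation `δ₃`. -/
def d3 (Φ : ℝ → ℝ → ℤ → ℂ) : ℝ → ℝ → ℤ → ℂ :=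
  fun x y p => 2 * Real.pi * Complex.I * (p : ℂ) * Φ x y p


/-- Elements of `S^c` decay quadratically in `p`, uniformly on the whole plane: the bound on the compact
unit square propagates because translating `x` or `y` by an integer does not change `‖Φ x y p‖`. -/
lemma InSc.exists_bound {c : ℕ} {Φ : ℝ → ℝ → ℤ → ℂ} (hΦ : InSc c Φ) :
    ∃ C : ℝ, 0 ≤ C ∧ ∀ (x y : ℝ) (p : ℤ), ‖Φ x y p‖ ≤ C * (1 / (1 + (p : ℝ) ^ 2)) := by
  obtain ⟨C, hC⟩ := hΦ.poly_bounded (1 + Polynomial.X ^ 2) 0 0 (Set.Icc 0 1 ×ˢ Set.Icc 0 1)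
    (isCompact_Icc.prod isCompact_Icc)
  have hy : ∀ x y p, ‖Φ x y p‖ = ‖Φ x (Int.fract y) p‖ := by
    intro x y p
    have hper : Function.Periodic (fun y => Φ x y p) 1 := fun y => hΦ.periodic_y x y p
    have := hper.sub_int_mul_eq (x := y) ⌊y⌋
    simp only [mul_one] at this
    rw [← this, Int.fract]
  have hx : ∀ x y p, ‖Φ x y p‖ = ‖Φ (Int.fract x) y p‖ := by
    intro x y p
    have h := hΦ.twisted ⌊x⌋ (Int.fract x) y p
    rw [Int.fract_add_floor] at h
    rw [h, norm_mul, Complex.norm_exp]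
    simp
  have key : ∀ (x y : ℝ) (p : ℤ), (1 + (p : ℝ) ^ 2) * ‖Φ x y p‖ ≤ C := by
    intro x y p
    have h := hC (Int.fract x) (Int.fract y) p
      ⟨⟨Int.fract_nonneg x, (Int.fract_lt_one x).le⟩, ⟨Int.fract_nonneg y, (Int.fract_lt_one y).le⟩⟩
    simp only [Polynomial.eval_add, Polynomial.eval_one, Polynomial.eval_pow, Polynomial.eval_X,
      iteratedDeriv_zero] at h
    push_cast at h
    rw [abs_of_nonneg (by positivity)] at h
    rwa [hx, hy]
  refine ⟨C, le_trans (by positivity) (key 0 0 0), fun x y p => ?_⟩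
  rw [mul_one_div, le_div_iff₀ (by positivity), mul_comm]
  exact key x y p

lemma summable_one_div_one_add_int_sq : Summable fun q : ℤ => 1 / (1 + (q : ℝ) ^ 2) := by
  have h1 : Summable fun q : ℤ => 1 / (q : ℝ) ^ 2 := Real.summable_one_div_int_pow.2 (by norm_num)
  have h2 : Summable fun q : ℤ => if q = 0 then (1 : ℝ) else 0 := (hasSum_ite_eq 0 1).summable
  refine Summable.of_nonneg_of_le (fun q => by positivity) (fun q => ?_) (h1.add h2)
  by_cases hq : q = 0
  · simp [hq]
  · have : 0 < (q : ℝ) ^ 2 := by positivity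
    simp only [hq, if_false, add_zero]
    gcongr
    linarith

/-- Termwise integration over the unit square of a normally convergent series of continuous
functions. -/
lemma integral_square_tsum (f : ℤ → ℝ → ℝ → ℂ) (b : ℤ → ℝ)
    (hf : ∀ q, Continuous (Function.uncurry (f q)))
    (hb : Summable b) (hfb : ∀ q x y, ‖f q x y‖ ≤ b q) :
    ∫ x in (0:ℝ)..1, ∫ y in (0:ℝ)..1, ∑' q, f q x y =
      ∑' q, ∫ x in (0:ℝ)..1, ∫ y in (0:ℝ)..1, f q x y := by
  have hinner : ∀ x, HasSum (fun q => ∫ y in (0:ℝ)..1, f q x y)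
      (∫ y in (0:ℝ)..1, ∑' q, f q x y) := fun x =>
    intervalIntegral.hasSum_integral_of_dominated_convergence (fun q _ => b q)
      (fun q => ((hf q).comp (by fun_prop : Continuous fun y : ℝ => (x, y))).aestronglyMeasurable)
      (fun q => .of_forall fun y _ => hfb q x y)
      (.of_forall fun _ _ => hb) (by simp)
      (.of_forall fun y _ => (Summable.of_norm_bounded hb fun q => hfb q x y).hasSum)
  refine (HasSum.tsum_eq ?_).symm
  refine intervalIntegral.hasSum_integral_of_dominated_convergence (fun q _ => b q)
      (fun q => (intervalIntegral.continuous_parametric_intervalIntegral_of_continuous'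
        (hf q) 0 1).aestronglyMeasurable)
      (fun q => .of_forall fun x _ => ?_)
      (.of_forall fun _ _ => hb) (by simp)
      (.of_forall fun x _ => hinner x)
  simpa using intervalIntegral.norm_integral_le_of_norm_le_const
    (a := 0) (b := 1) (fun y _ => hfb q x y)

lemma integral_unit_translate {E : Type*} [NormedAddCommGroup E] [NormedSpace ℝ E] (g : ℝ → E)
    (hg : Function.Periodic g 1) (s : ℝ) :
    ∫ x in (0:ℝ)..1, g (x - s) = ∫ x in (0:ℝ)..1, g x := by
  rw [intervalIntegral.integral_comp_sub_right]
  have := hg.intervalIntegral_add_eq (0 - s) 0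
  rwa [zero_add, show 0 - s + 1 = 1 - s by ring] at this

lemma integral_square_translate (F : ℝ → ℝ → ℂ) (hx : ∀ x y, F (x + 1) y = F x y)
    (hy : ∀ x y, F x (y + 1) = F x y) (s t : ℝ) :
    ∫ x in (0:ℝ)..1, ∫ y in (0:ℝ)..1, F (x - s) (y - t) =
      ∫ x in (0:ℝ)..1, ∫ y in (0:ℝ)..1, F x y := by
  simp_rw [fun x => integral_unit_translate (F x) (hy x) t]
  exact integral_unit_translate (fun x => ∫ y in (0:ℝ)..1, F x y) (fun x => by simp only [hx]) s

/-- The trace of a star product, with the translations depending on `ħ`, `μ`, `ν` removed. -/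
lemma tr_starProd {c : ℕ} (hbar μ ν : ℝ) {Φ Ψ : ℝ → ℝ → ℤ → ℂ} (hΦ : InSc c Φ) (hΨ : InSc c Ψ) :
    tr (starProd hbar μ ν Φ Ψ) =
      ∑' q : ℤ, ∫ x in (0:ℝ)..1, ∫ y in (0:ℝ)..1, Φ x y q * Ψ x y (-q) := by
  obtain ⟨C, hC0, hC⟩ := hΦ.exists_bound
  obtain ⟨D, hD0, hD⟩ := hΨ.exists_bound
  simp only [tr, starProd, sub_zero, zero_sub]
  rw [integral_square_tsum _ (fun q : ℤ => C * D * (1 / (1 + (q : ℝ) ^ 2)))]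
  · refine tsum_congr fun q => ?_
    refine integral_square_translate (fun x y => Φ x y q * Ψ x y (-q)) ?_ ?_ _ _
    · intro x y
      -- The phases `e(cqy)` and `e(-cqy)` cancel.
      have h1 := hΦ.twisted 1 x y q
      have h2 := hΨ.twisted 1 x y (-q)
      rw [Int.cast_one] at h1 h2
      simp only [h1, h2]
      rw [mul_mul_mul_comm, ← Complex.exp_add]
      have h0 : ∀ a b : ℂ, a = -b → Complex.exp (a + b) = 1 := by
        intro a b h
        simp [h]
      rw [h0 _ _ (by push_cast; ring), one_mul]
    · intro x y
      simp only [hΦ.periodic_y, hΨ.periodic_y]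
  · intro q
    have h1 := (hΦ.smooth q).continuous
    have h2 := (hΨ.smooth (-q)).continuous
    have hs : Continuous fun z : ℝ × ℝ => (z.1 - hbar * (q : ℝ) * μ, z.2 - hbar * (q : ℝ) * ν) := by
      fun_prop
    exact (h1.comp hs).mul (h2.comp hs)
  · exact summable_one_div_one_add_int_sq.mul_left _
  · intro q x y
    rw [norm_mul]
    have hD' : ∀ x y p, ‖Ψ x y p‖ ≤ D := by
      intro x y p
      refine (hD x y p).trans (mul_le_of_le_one_right hD0 ?_)
      rw [div_le_one (by positivity)]
      nlinarith [sq_nonneg (p : ℝ)]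
    calc _ ≤ C * (1 / (1 + (q : ℝ) ^ 2)) * D :=
          mul_le_mul (hC _ _ _) (hD' _ _ _) (norm_nonneg _) (by positivity)
      _ = _ := by ring

theorem tr_tracial (c : ℕ) (hc : 0 < c) (hbar μ ν : ℝ) (hμν : μ ^ 2 + ν ^ 2 ≠ 0)
    (Φ Ψ : ℝ → ℝ → ℤ → ℂ) (hΦ : InSc c Φ) (hΨ : InSc c Ψ) :
    tr (starProd hbar μ ν Φ Ψ) = tr (starProd hbar μ ν Ψ Φ) := by
  rw [tr_starProd hbar μ ν hΦ hΨ, tr_starProd hbar μ ν hΨ hΦ, ← (Equiv.neg ℤ).tsum_eq]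
  simp only [Equiv.neg_apply, neg_neg, mul_comm]

end
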